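/- Let K be a field, B = K[x_1,…,x_n] with n > 0, and φ: B → B a K-algebra endomorphism with φ(x_i) = f_i, where f_1, …, f_n are algebraically independent over K; let A = φ(B). Let g ∈ B be an element of total degree D that is integral over A, with minimal polynomial G = a_0 + a_1 T + ⋯ + a_{r−1} T^{r−1} + T^r over the fraction field K(A). Then each coefficient a_i lies in φ(B_{≤m}), where m = 2^n deg(φ)^{n−1} (n + D·deg(φ)^n). -/

import Mathlib

/-- The degree of a `K`-algebra endomorphism `φ` of the polynomial ring `K[x_1, …, x_n]`:
`deg(φ) = max {deg f_1, …, deg f_n}` where `f_i = φ(x_i)` and `deg` is total degree. -/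
noncomputable def polyDeg {K : Type*} [CommSemiring K] {n : ℕ}
    (φ : MvPolynomial (Fin n) K →ₐ[K] MvPolynomial (Fin n) K) : ℕ :=
  Finset.univ.sup fun i : Fin n => (φ (MvPolynomial.X i)).totalDegree

open MvPolynomial in
/-- The fraction field `K(A)` of the image `A = φ(B)` of a polynomial endomorphism `φ`,
realized as the subfield of `K(B) = FractionRing B` generated by the image of `A`. -/
noncomputable def imageFractionSubfield {K : Type*} [Field K] {n : ℕ}
    (φ : MvPolynomial (Fin n) K →ₐ[K] MvPolynomial (Fin n) K) :
    Subfield (FractionRing (MvPolynomial (Fin n) K)) :=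
  Subfield.closure
    (algebraMap (MvPolynomial (Fin n) K) (FractionRing (MvPolynomial (Fin n) K)) ''
      (φ.range : Set (MvPolynomial (Fin n) K)))

/-!
Write `d = deg φ`, `D = deg g` and `M = 2 ^ n * d ^ (n - 1) * D`. The sums
`∑_{j ≤ (2d)^n} φ(c_j) g^j` with `c_j ∈ B_{≤M}` all lie in `B_{≤2dM}`, because `(2d)^n * D = d * M`.
Dividing exponents by `2d` with remainder gives `dim B_{≤2dM} ≤ (2d)^n * dim B_{≤M}`, so the linear
map from coefficient vectors `(c_j)` to these sums has a kernel: `g` is a root of `φ(P)` for some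
nonzero `P ∈ B[T]` with coefficients in `B_{≤M}`. As `B ≅ A` is integrally closed, the minimal
polynomial of `g` over `K(A)` is `φ(G)` for a divisor `G` of `P` in `B[T]`. The total degree in the
`x_i` is additive on products in `B[T]`, so `G` inherits the bound `M` from `P`.
-/

open MvPolynomial

section Transpose

variable {R σ : Type*} [CommSemiring R]

/-- The identification of `R[x_i][T]` with `R[T][x_i]`, as a homomorphism. It turns a bound on the
total degrees in the `x_i` of all coefficients into a bound on a single total degree. -/
noncomputable def polynomialTranspose :
    Polynomial (MvPolynomial σ R) →+* MvPolynomial σ (Polynomial R) :=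
  Polynomial.eval₂RingHom (MvPolynomial.map Polynomial.C) (C Polynomial.X)

theorem coeff_coeff_polynomialTranspose (P : Polynomial (MvPolynomial σ R)) (m : σ →₀ ℕ) (i : ℕ) :
    ((polynomialTranspose P).coeff m).coeff i = (P.coeff i).coeff m := by
  induction P using Polynomial.induction_on' with
  | add p q hp hq => simp [hp, hq]
  | monomial k a =>
    rw [polynomialTranspose, Polynomial.coe_eval₂RingHom, Polynomial.eval₂_monomial, ← map_pow,
      mul_comm, coeff_C_mul, coeff_map, Polynomial.coeff_mul_C, Polynomial.coeff_X_pow,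
      Polynomial.coeff_monomial]
    simp only [eq_comm (a := i), ite_mul, one_mul, zero_mul, apply_ite (coeff m), coeff_zero]

theorem polynomialTranspose_injective :
    Function.Injective (polynomialTranspose (R := R) (σ := σ)) := by
  intro P Q h
  ext i m
  rw [← coeff_coeff_polynomialTranspose, h, coeff_coeff_polynomialTranspose]

theorem totalDegree_polynomialTranspose_le_iff {P : Polynomial (MvPolynomial σ R)} {M : ℕ} :
    (polynomialTranspose P).totalDegree ≤ M ↔ ∀ i, (P.coeff i).totalDegree ≤ M := by
  have coeff_ne_zero_iff (m : σ →₀ ℕ) :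
      (polynomialTranspose P).coeff m ≠ 0 ↔ ∃ i, (P.coeff i).coeff m ≠ 0 := by
    simp only [ne_eq, Polynomial.ext_iff, coeff_coeff_polynomialTranspose, Polynomial.coeff_zero,
      not_forall]
  simp only [totalDegree, Finset.sup_le_iff, mem_support_iff, coeff_ne_zero_iff]
  exact ⟨fun h i m hm => h m ⟨i, hm⟩, fun h m ⟨i, hm⟩ => h i m hm⟩

end Transpose

theorem totalDegree_coeff_le_of_dvd {R σ : Type*} [CommRing R] [IsDomain R]
    {G P : Polynomial (MvPolynomial σ R)} (hGP : G ∣ P) (hP : P ≠ 0) {M : ℕ}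
    (hM : ∀ i, (P.coeff i).totalDegree ≤ M) (i : ℕ) : (G.coeff i).totalDegree ≤ M := by
  have hP' : polynomialTranspose P ≠ 0 := (map_ne_zero_iff _ polynomialTranspose_injective).2 hP
  have hdeg := totalDegree_le_of_dvd_of_isDomain (map_dvd polynomialTranspose hGP) hP'
  exact totalDegree_polynomialTranspose_le_iff.1
    (hdeg.trans (totalDegree_polynomialTranspose_le_iff.2 hM)) i

section Counting

variable {σ : Type*}

theorem finrank_restrictTotalDegree (R : Type*) [CommRing R] [Nontrivial R] (M : ℕ) :
    Module.finrank R (restrictTotalDegree σ R M) = {m : σ →₀ ℕ | m.degree ≤ M}.ncard :=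
  Module.finrank_eq_nat_card_basis (basisRestrictSupport R {m : σ →₀ ℕ | m.degree ≤ M})

variable [Finite σ]

theorem ncard_degree_le_mul_le {q : ℕ} (hq : 0 < q) (M : ℕ) :
    {m : σ →₀ ℕ | m.degree ≤ q * M}.ncard ≤
      q ^ Nat.card σ * {m : σ →₀ ℕ | m.degree ≤ M}.ncard := by
  have := Fintype.ofFinite σ
  have : Finite {m : σ →₀ ℕ | m.degree ≤ M} := Finsupp.finite_of_degree_le M
  have degree_div_le {m : σ →₀ ℕ} (hm : m.degree ≤ q * M) :
      (m.mapRange (· / q) (Nat.zero_div q)).degree ≤ M := by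
    rw [Finsupp.degree_eq_sum] at hm ⊢
    refine le_of_mul_le_mul_left (le_trans ?_ hm) hq
    rw [Finset.mul_sum]
    exact Finset.sum_le_sum fun i _ => Nat.mul_div_le (m i) q
  let divMod (m : {m : σ →₀ ℕ | m.degree ≤ q * M}) :
      (σ → Fin q) × {m : σ →₀ ℕ | m.degree ≤ M} :=
    (fun i => ⟨m.1 i % q, Nat.mod_lt _ hq⟩, ⟨_, degree_div_le m.2⟩)
  have divMod_injective : Function.Injective divMod := by
    rintro ⟨a, ha⟩ ⟨b, hb⟩ hab
    obtain ⟨hmod, hdiv⟩ := Prod.ext_iff.1 hab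
    refine Subtype.ext (Finsupp.ext fun i => ?_)
    have hmod_i : a i % q = b i % q := congrArg Fin.val (congrFun hmod i)
    have hdiv_i : a i / q = b i / q := DFunLike.congr_fun (congrArg Subtype.val hdiv) i
    rw [← Nat.div_add_mod (a i) q, hmod_i, hdiv_i, Nat.div_add_mod]
  simpa only [Nat.card_prod, Nat.card_fun, Nat.card_fin, Nat.card_coe_set_eq] using
    Nat.card_le_card_of_injective divMod divMod_injective

theorem finrank_restrictTotalDegree_mul_lt (R : Type*) [CommRing R] [Nontrivial R] {q : ℕ}
    (hq : 0 < q) (M : ℕ) :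
    Module.finrank R (restrictTotalDegree σ R (q * M)) <
      (q ^ Nat.card σ + 1) * Module.finrank R (restrictTotalDegree σ R M) := by
  have hpos : 0 < {m : σ →₀ ℕ | m.degree ≤ M}.ncard :=
    (Set.ncard_pos (Finsupp.finite_of_degree_le M)).2 ⟨0, by simp⟩
  rw [finrank_restrictTotalDegree, finrank_restrictTotalDegree, add_one_mul]
  exact (ncard_degree_le_mul_le hq M).trans_lt (Nat.lt_add_of_pos_right hpos)

end Counting

theorem totalDegree_algHom_apply_le {R σ τ : Type*} [CommSemiring R]
    {φ : MvPolynomial σ R →ₐ[R] MvPolynomial τ R} {d : ℕ}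
    (hd : ∀ i, (φ (X i)).totalDegree ≤ d) (p : MvPolynomial σ R) :
    (φ p).totalDegree ≤ d * p.totalDegree := by
  conv_lhs => rw [p.as_sum, map_sum]
  refine totalDegree_finsetSum_le fun m hm => ?_
  have map_monomial : φ (monomial m (p.coeff m)) =
      C (p.coeff m) * ∏ i ∈ m.support, φ (X i) ^ m i := by
    rw [monomial_eq, map_mul, Finsupp.prod, map_prod]
    simp only [map_pow, algHom_C, algebraMap_eq]
  calc (φ (monomial m (p.coeff m))).totalDegree
      ≤ ∑ i ∈ m.support, (φ (X i) ^ m i).totalDegree := by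
        rw [map_monomial]
        refine (totalDegree_mul _ _).trans ?_
        rw [totalDegree_C, zero_add]
        exact totalDegree_finsetProd _ _
    _ ≤ ∑ i ∈ m.support, m i * d := Finset.sum_le_sum fun i _ =>
        (totalDegree_pow _ _).trans (Nat.mul_le_mul_left _ (hd i))
    _ = d * m.degree := by rw [← Finset.sum_mul, mul_comm, Finsupp.degree_apply]
    _ ≤ d * p.totalDegree := Nat.mul_le_mul_left d (le_totalDegree hm)

theorem exists_eval₂_eq_zero_of_finrank_lt {R A B : Type*} [CommRing R] [Nontrivial R]
    [CommRing A] [Algebra R A] [CommRing B] [Algebra R B] (f : A →ₐ[R] B) (g : B)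
    {V : Submodule R A} [Module.Free R V] [Module.Finite R V]
    {W : Submodule R B} [Module.Finite R W] {k : ℕ}
    (hW : ∀ a ∈ V, ∀ j < k, f a * g ^ j ∈ W)
    (hlt : Module.finrank R W < k * Module.finrank R V) :
    ∃ P : Polynomial A, P ≠ 0 ∧ (∀ i, P.coeff i ∈ V) ∧ P.eval₂ (f : A →+* B) g = 0 := by
  classical
  let evalAt : (Fin k → V) →ₗ[R] B :=
    ∑ j : Fin k, LinearMap.mulRight R (g ^ (j : ℕ)) ∘ₗ f.toLinearMap ∘ₗ V.subtype ∘ₗ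
      LinearMap.proj j
  have evalAt_apply (c) : evalAt c = ∑ j : Fin k, f (c j) * g ^ (j : ℕ) := by simp [evalAt]
  have evalAt_mem (c) : evalAt c ∈ W := by
    rw [evalAt_apply]
    exact W.sum_mem fun j _ => hW _ (c j).2 j j.2
  have not_injective : ¬ Function.Injective (evalAt.codRestrict W evalAt_mem) := fun h => by
    have hle := LinearMap.finrank_le_finrank_of_injective h
    rw [Module.finrank_pi_fintype, Finset.sum_const, Finset.card_univ, Fintype.card_fin,
      smul_eq_mul] at hle
    exact hle.not_gt hlt
  rw [injective_iff_map_eq_zero] at not_injective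
  push Not at not_injective
  obtain ⟨c, hc, hc0⟩ := not_injective
  let P : Polynomial A := Polynomial.ofFn k fun j => (c j : A)
  have coeff_P (j : Fin k) : P.coeff j = c j := Polynomial.ofFn_coeff_eq_val_of_lt _ j.2
  refine ⟨P, fun hP => hc0 ?_, fun i => ?_, ?_⟩
  · ext j
    simpa [hP] using (coeff_P j).symm
  · obtain hi | hi := lt_or_ge i k
    · exact coeff_P ⟨i, hi⟩ ▸ (c ⟨i, hi⟩).2
    · rw [Polynomial.ofFn_coeff_eq_zero_of_ge _ hi]
      exact V.zero_mem
  · simp only [P, Polynomial.ofFn_eq_sum_monomial, Polynomial.eval₂_finsetSum,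
      Polynomial.eval₂_monomial]
    exact (evalAt_apply c).symm.trans (congrArg Subtype.val hc)

theorem exists_eval₂_eq_zero_totalDegree_coeff_le {R σ : Type*} [CommRing R] [Nontrivial R]
    [Finite σ] [Nonempty σ] {φ : MvPolynomial σ R →ₐ[R] MvPolynomial σ R} {d : ℕ}
    (hd : ∀ i, (φ (X i)).totalDegree ≤ d) (hd0 : 0 < d) (g : MvPolynomial σ R) :
    ∃ P : Polynomial (MvPolynomial σ R), P ≠ 0 ∧
      (∀ i, (P.coeff i).totalDegree ≤ 2 ^ Nat.card σ * d ^ (Nat.card σ - 1) * g.totalDegree) ∧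
      P.eval₂ (φ : MvPolynomial σ R →+* MvPolynomial σ R) g = 0 := by
  set n := Nat.card σ
  set M := 2 ^ n * d ^ (n - 1) * g.totalDegree with hM
  have hdM : (2 * d) ^ n * g.totalDegree = d * M := by
    rw [hM, mul_pow, ← mul_pow_sub_one Nat.card_pos.ne' d]
    ring
  have : Module.Free R (restrictTotalDegree σ R M) :=
    .of_basis (basisRestrictSupport R {m : σ →₀ ℕ | m.degree ≤ M})
  simp only [← mem_restrictTotalDegree]
  refine exists_eval₂_eq_zero_of_finrank_lt φ g (W := restrictTotalDegree σ R (2 * d * M))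
    (fun a ha j hj => ?_) (finrank_restrictTotalDegree_mul_lt R (by positivity) M)
  rw [mem_restrictTotalDegree] at ha ⊢
  calc (φ a * g ^ j).totalDegree
      ≤ (φ a).totalDegree + (g ^ j).totalDegree := totalDegree_mul _ _
    _ ≤ d * M + (2 * d) ^ n * g.totalDegree := by
        gcongr
        · exact (totalDegree_algHom_apply_le hd a).trans (Nat.mul_le_mul_left d ha)
        · exact (totalDegree_pow g j).trans (Nat.mul_le_mul_right _ (Nat.le_of_lt_succ hj))
    _ = 2 * d * M := by rw [hdM]; ring

theorem totalDegree_pos_of_transcendental {R σ : Type*} [CommRing R] [Nontrivial R]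
    {p : MvPolynomial σ R} (hp : Transcendental R p) : 0 < p.totalDegree := by
  by_contra! hdeg
  apply hp
  rw [totalDegree_eq_zero_iff_eq_C.1 (Nat.le_zero.1 hdeg)]
  exact isAlgebraic_algebraMap _

theorem totalDegree_apply_X_le_polyDeg {K : Type*} [CommSemiring K] {n : ℕ}
    (φ : MvPolynomial (Fin n) K →ₐ[K] MvPolynomial (Fin n) K) (i : Fin n) :
    (φ (X i)).totalDegree ≤ polyDeg φ :=
  Finset.le_sup (f := fun j => (φ (X j)).totalDegree) (Finset.mem_univ i)

theorem isIntegrallyClosed_mvPolynomial (R σ : Type*) [CommRing R] [IsDomain R]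
    [IsIntegrallyClosed R] [Finite σ] : IsIntegrallyClosed (MvPolynomial σ R) := by
  induction σ using Finite.induction_empty_option with
  | of_equiv e ih => exact .of_equiv (renameEquiv R e).toRingEquiv
  | h_empty => exact .of_equiv (isEmptyRingEquiv R PEmpty).symm
  | h_option ih => exact .of_equiv (optionEquivLeft R _).symm.toRingEquiv

theorem exists_map_eq_minpoly_closure_range {A L : Type*} [CommRing A] [IsIntegrallyClosed A]
    [Field L] {f : A →+* L} (hf : Function.Injective f) {x : L} (hx : f.IsIntegralElem x) :
    ∃ G : Polynomial A,
      (minpoly (Subfield.closure (Set.range f)) x).map (algebraMap _ L) = G.map f ∧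
      ∀ P : Polynomial A, P.eval₂ f x = 0 → G ∣ P := by
  have : IsDomain A := hf.isDomain f
  let F := Subfield.closure (Set.range f)
  let toF : A →+* F := f.codRestrict F fun a => Subfield.subset_closure ⟨a, rfl⟩
  let : Algebra A F := toF.toAlgebra
  let : Algebra A L := f.toAlgebra
  have : IsScalarTower A F L := .of_algebraMap_eq fun _ => rfl
  have : FaithfulSMul A L := (faithfulSMul_iff_algebraMap_injective A L).2 hf
  have : FaithfulSMul A F := (faithfulSMul_iff_algebraMap_injective A F).2 fun a b hab =>
    hf (congrArg Subtype.val hab)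
  have : IsFractionRing A F := .of_field A F fun ⟨z, hz⟩ => by
    obtain ⟨u, hu, v, hv, rfl⟩ := Subfield.mem_closure_iff.1 hz
    rw [← RingHom.coe_range, Subring.closure_eq] at hu hv
    obtain ⟨a, rfl⟩ := hu
    obtain ⟨b, rfl⟩ := hv
    exact ⟨a, b, rfl⟩
  refine ⟨minpoly A x, ?_, fun P => minpoly.isIntegrallyClosed_dvd hx⟩
  rw [minpoly.isIntegrallyClosed_eq_field_fractions' F hx, Polynomial.map_map]
  rfl

theorem isIntegralElem_of_monic_of_coeff_mem_range {A B : Type*} [CommRing A] [CommRing B]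
    {f : A →+* B} {x : B} {F : Polynomial B} (hF : F.Monic) (hcoeff : ∀ k, F.coeff k ∈ f.range)
    (hx : F.eval x = 0) : f.IsIntegralElem x := by
  have hlifts : F ∈ Polynomial.lifts f := (Polynomial.lifts_iff_coeff_lifts F).2 hcoeff
  obtain ⟨Q, hQF, -, hQ⟩ := Polynomial.lifts_and_natDegree_eq_and_monic hlifts hF
  exact ⟨Q, hQ, by rw [← Polynomial.eval_map, hQF, hx]⟩

theorem polynomial_minimal_polynomial_coefficient_bound_general {R σ L : Type*} [CommRing R]
    [IsDomain R] [IsIntegrallyClosed R] [Finite σ] [Nonempty σ] [Field L]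
    [Algebra (MvPolynomial σ R) L] [FaithfulSMul (MvPolynomial σ R) L]
    {φ : MvPolynomial σ R →ₐ[R] MvPolynomial σ R}
    (hind : AlgebraicIndependent R fun j => φ (X j))
    {d : ℕ} (hd : ∀ j, (φ (X j)).totalDegree ≤ d) {g : MvPolynomial σ R}
    (hg : (φ : MvPolynomial σ R →+* MvPolynomial σ R).IsIntegralElem g) (i : ℕ) :
    ∃ b : MvPolynomial σ R,
      b.totalDegree ≤ 2 ^ Nat.card σ * d ^ (Nat.card σ - 1) * g.totalDegree ∧
      ((minpoly (Subfield.closure (algebraMap (MvPolynomial σ R) L '' φ.range))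
        (algebraMap (MvPolynomial σ R) L g)).coeff i : L) =
        algebraMap (MvPolynomial σ R) L (φ b) := by
  have := isIntegrallyClosed_mvPolynomial R σ
  let ι := algebraMap (MvPolynomial σ R) L
  let f := ι.comp (φ : MvPolynomial σ R →+* MvPolynomial σ R)
  have hφ : Function.Injective φ := by
    rw [aeval_unique φ]
    exact hind
  have hf : Function.Injective f := (FaithfulSMul.algebraMap_injective _ L).comp hφ
  have range_f : ι '' φ.range = Set.range f := by
    rw [AlgHom.coe_range, ← Set.range_comp]; rfl
  obtain ⟨j⟩ := ‹Nonempty σ›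
  have hd0 : 0 < d := (totalDegree_pos_of_transcendental (hind.transcendental j)).trans_le (hd j)
  obtain ⟨P, hP0, hPdeg, hPg⟩ := exists_eval₂_eq_zero_totalDegree_coeff_le hd hd0 g
  obtain ⟨G, hG, hGdvd⟩ := exists_map_eq_minpoly_closure_range hf (x := ι g) (hg.map ι)
  have hGP : G ∣ P := hGdvd P (by rw [← Polynomial.hom_eval₂, hPg, map_zero])
  refine ⟨G.coeff i, totalDegree_coeff_le_of_dvd hGP hP0 hPdeg i, ?_⟩
  have hcoeff := congrArg (Polynomial.coeff · i) hG
  simp only [Polynomial.coeff_map] at hcoeff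
  rw [range_f]
  exact hcoeff

open MvPolynomial in
/-- Let `K` be a field, `B = K[x_1, …, x_n]` with `n > 0`, `φ : B → B` a
`K`-algebra endomorphism with `φ(x_i) = f_i` algebraically independent over `K`, and
`A = φ(B)`.  Let `g ∈ B` be of total degree `D`, integral over `A`, with minimal polynomial
`G = a_0 + a_1 T + ⋯ + a_{r−1} T^{r−1} + T^r` over the fraction field `K(A)`.  Then every
coefficient `a_i` lies in `φ(B_{≤m})`, where `m = 2^n deg(φ)^{n−1} (n + D·deg(φ)^n)`. -/
theorem polynomial_minimal_polynomial_coefficient_bound (K : Type*) [Field K] (n : ℕ)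
    (hn : 0 < n) (φ : MvPolynomial (Fin n) K →ₐ[K] MvPolynomial (Fin n) K)
    (hind : AlgebraicIndependent K fun i => φ (X i))
    (g : MvPolynomial (Fin n) K)
    (hint : ∃ F : Polynomial (MvPolynomial (Fin n) K), F.Monic ∧
        (∀ k, F.coeff k ∈ φ.range) ∧ Polynomial.eval g F = 0) :
    ∀ i < (minpoly (imageFractionSubfield φ)
        (algebraMap (MvPolynomial (Fin n) K) (FractionRing (MvPolynomial (Fin n) K)) g)).natDegree,
      ∃ b : MvPolynomial (Fin n) K,
        b.totalDegree ≤ 2 ^ n * polyDeg φ ^ (n - 1) * (n + g.totalDegree * polyDeg φ ^ n) ∧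
        ((((minpoly (imageFractionSubfield φ)
            (algebraMap (MvPolynomial (Fin n) K) (FractionRing (MvPolynomial (Fin n) K)) g)).coeff i
          : imageFractionSubfield φ) : FractionRing (MvPolynomial (Fin n) K))
          = algebraMap (MvPolynomial (Fin n) K) (FractionRing (MvPolynomial (Fin n) K)) (φ b)) := by
  intro i _
  have : Nonempty (Fin n) := ⟨⟨0, hn⟩⟩
  obtain ⟨F, hF, hFcoeff, hFg⟩ := hint
  obtain ⟨b, hb, hcoeff⟩ := polynomial_minimal_polynomial_coefficient_bound_general
    (L := FractionRing (MvPolynomial (Fin n) K)) hind (totalDegree_apply_X_le_polyDeg φ)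
    (isIntegralElem_of_monic_of_coeff_mem_range hF hFcoeff hFg) i
  have hpos : 0 < polyDeg φ := (totalDegree_pos_of_transcendental
    (hind.transcendental ⟨0, hn⟩)).trans_le (totalDegree_apply_X_le_polyDeg φ _)
  refine ⟨b, hb.trans ?_, hcoeff⟩
  rw [Nat.card_fin]
  gcongr
  exact (Nat.le_mul_of_pos_right _ (pow_pos hpos n)).trans (Nat.le_add_left _ n)
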